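/- Let p₁ ≡ 7 (mod 8) be a prime, let m ≥ 1, set N = 2p₁^m, and let p ≡ 1 (mod 4) be a prime with f := ord_N(p) = φ(N)/2. Let s be an odd positive integer and set q = p^{fs}. Let γ be any primitive element of F_q, let C_i = γ^i⟨γ^N⟩ (0 ≤ i ≤ N−1) be the cyclotomic classes of order N of F_q, let I ⊆ {0, 1, …, N−1} be any subset such that reduction modulo p₁^m maps I bijectively onto Z_{p₁^m}, and let D = ⋃_{i∈I} C_i. Then D is a Paley type partial difference set in the additive group of F_q. -/

import Mathlib

open scoped Classical

/-- The cyclotomic class `C_i = γ^i ⟨γ^N⟩ = {γ^{i+Nk} : k ∈ ℤ}` of order `N` of a finite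
field, with respect to the primitive element `γ`. -/
def cycClass {F : Type*} [Field F] (γ : Fˣ) (N i : ℕ) : Set F :=
  {x : F | ∃ k : ℤ, x = ((γ ^ ((i : ℤ) + (N : ℤ) * k) : Fˣ) : F)}

/-- `D` is a Paley type partial difference set in the finite abelian group `(G, +)` of
order `v`: `0 ∉ D`, `-D = D`, and every nonzero `g ∈ G` has exactly `(v-5)/4` resp.
`(v-1)/4` representations `g = d₁ - d₂` with `d₁, d₂ ∈ D`, according as `g ∈ D` or
`g ∉ D`. -/
def IsPaleyTypePDS {G : Type*} [AddCommGroup G] [Fintype G] (D : Set G) : Prop :=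
  (0 : G) ∉ D ∧ (∀ g : G, -g ∈ D ↔ g ∈ D) ∧
    ∀ g : G, g ≠ 0 →
      (g ∈ D → 4 * Nat.card {x : G × G // x.1 ∈ D ∧ x.2 ∈ D ∧ x.1 - x.2 = g} + 5 =
        Fintype.card G) ∧
      (g ∉ D → 4 * Nat.card {x : G × G // x.1 ∈ D ∧ x.2 ∈ D ∧ x.1 - x.2 = g} + 1 =
        Fintype.card G)


/-- The complex-valued quadratic character of a finite field. -/
noncomputable def qc (F : Type*) [Field F] [Fintype F] : MulChar F ℂ :=
  (quadraticChar F).ringHomComp (Int.castRingHom ℂ)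

lemma qc_apply {F : Type*} [Field F] [Fintype F] (x : F) :
    qc F x = ((quadraticChar F x : ℤ) : ℂ) := rfl

lemma qc_isQuadratic (F : Type*) [Field F] [Fintype F] : (qc F).IsQuadratic :=
  (quadraticChar_isQuadratic F).comp _

lemma qc_ne_one {F : Type*} [Field F] [Fintype F] (hF : ringChar F ≠ 2) : qc F ≠ 1 :=
  (MulChar.ringHomComp_ne_one_iff (Int.cast_injective (α := ℂ))).mpr (quadraticChar_ne_one hF)

/-- `J(ψ,ψ) ψ(4) = J(η,ψ)`. -/
lemma jacobi_dup {F : Type*} [Field F] [Fintype F] (hF : ringChar F ≠ 2)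
    (ψ : MulChar F ℂ) (hψ : ψ ≠ 1) (h2 : ψ 2 = 1) :
    jacobiSum ψ ψ = jacobiSum (qc F) ψ := by
  have two : (2 : F) ≠ 0 := Ring.two_ne_zero hF
  have h4 : ψ 4 = 1 := by
    rw [show (4 : F) = 2 * 2 by norm_num, map_mul, h2, one_mul]
  have e1 : jacobiSum ψ ψ = ∑ y : F, ψ (1 - y ^ 2) := by
    unfold jacobiSum
    refine Fintype.sum_bijective (fun x : F => 2 * x - 1) ?_ _ _ ?_
    · constructor
      · intro x y h
        simpa [two] using h
      · intro y
        exact ⟨(y + 1) / 2, by field_simp; ring⟩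
    · intro x
      rw [show (1 : F) - (2 * x - 1) ^ 2 = 4 * (x * (1 - x)) by ring, map_mul, map_mul, h4, one_mul]
  have e2 : ∑ y : F, ψ (1 - y ^ 2) = ∑ z : F, (qc F z + 1) * ψ (1 - z) := by
    rw [← Finset.sum_fiberwise (s := Finset.univ) (g := fun y : F => y ^ 2)]
    refine Finset.sum_congr rfl fun z _ => ?_
    have hc := quadraticChar_card_sqrts hF z
    rw [Finset.sum_congr rfl (g := fun _ => ψ (1 - z))]
    · rw [Finset.sum_const, nsmul_eq_mul]
      congr 1
      rw [qc_apply]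
      have hc' : ((Finset.univ.filter (fun y : F => y ^ 2 = z)).card : ℤ) = quadraticChar F z + 1 := by
        rw [← hc]; congr 2; ext; simp
      exact_mod_cast congrArg (Int.cast : ℤ → ℂ) hc'
    · intro y hy
      simp at hy
      rw [hy]
  rw [e1, e2]
  simp only [add_mul, one_mul, Finset.sum_add_distrib]
  have : ∑ x : F, ψ (1 - x) = 0 := by
    rw [← MulChar.sum_eq_zero_of_ne_one hψ]
    exact Equiv.sum_comp (Equiv.subLeft (1 : F)) ψ
  rw [this, add_zero]; rfl

/-- Davenport–Hasse consequence. -/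
lemma gauss_twist {F : Type*} [Field F] [Fintype F] (hF : ringChar F ≠ 2)
    (e : AddChar F ℂ) (he : e.IsPrimitive)
    (ψ : MulChar F ℂ) (P : ℕ) (hP : Odd P) (hψP : ψ ^ P = 1) (h2 : ψ 2 = 1)
    (hg : gaussSum (ψ ^ 2) e = gaussSum ψ e) :
    gaussSum (ψ * qc F) e = gaussSum (qc F) e := by
  by_cases hψ : ψ = 1
  · simp [hψ]
  have hq2 : qc F ^ 2 = 1 := (qc_isQuadratic F).sq_eq_one
  have hqP : qc F ^ P = qc F := by
    obtain ⟨k, rfl⟩ := hP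
    rw [pow_succ, pow_mul, hq2, one_pow, one_mul]
  have n1 : ψ * qc F ≠ 1 := by
    intro h
    have := congrArg (· ^ P) h
    simp only [mul_pow, hψP, hqP, one_mul, one_pow] at this
    exact qc_ne_one hF this
  have n2 : ψ * ψ ≠ 1 := by
    intro h
    apply hψ
    obtain ⟨k, rfl⟩ := hP
    rw [pow_succ, pow_mul, sq, h, one_pow, one_mul] at hψP
    exact hψP
  have hcard : (Fintype.card F : ℂ) ≠ 0 := by exact_mod_cast Fintype.card_ne_zero
  have g0 := gaussSum_ne_zero_of_nontrivial hcard hψ he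
  have j1 := jacobiSum_mul_nontrivial n2 e
  have j2 := jacobiSum_mul_nontrivial n1 e
  rw [jacobi_dup hF ψ hψ h2, ← sq, hg] at j1
  rw [jacobiSum_comm] at j2
  have j3 : jacobiSum (qc F) ψ = gaussSum ψ e := mul_left_cancel₀ g0 j1
  rw [j3, mul_comm] at j2
  exact mul_left_cancel₀ g0 j2

/-- A Frobenius invariant primitive additive character. -/
lemma exists_addChar {F : Type*} [Field F] [Fintype F] (p : ℕ) [Fact p.Prime] [CharP F p] :
    ∃ e : AddChar F ℂ, e.IsPrimitive ∧ ∀ x, e (x ^ p) = e x := by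
  letI := ZMod.algebra F p
  let e : AddChar F ℂ :=
    (ZMod.stdAddChar (N := p)).compAddMonoidHom (Algebra.trace (ZMod p) F).toAddMonoidHom
  have hev : ∀ x, e x = ZMod.stdAddChar (Algebra.trace (ZMod p) F x) := fun x => rfl
  refine ⟨e, AddChar.IsPrimitive.of_ne_one ?_, ?_⟩
  · intro h
    obtain ⟨x, hx⟩ := Algebra.trace_surjective (ZMod p) F 1
    have h1 := hev x
    rw [h, hx, AddChar.one_apply, ← AddChar.map_zero_eq_one (ZMod.stdAddChar (N := p))] at h1
    exact zero_ne_one (ZMod.injective_stdAddChar h1)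
  · intro x
    rw [hev, hev]
    congr 1
    have := Algebra.trace_eq_of_algEquiv (FiniteField.frobeniusAlgEquiv (ZMod p) F p) x
    rw [← this]
    simp [FiniteField.frobeniusAlgEquiv]

lemma gauss_frob {F : Type*} [Field F] [Fintype F] (p : ℕ) [Fact p.Prime] [CharP F p]
    (e : AddChar F ℂ) (he : ∀ x, e (x ^ p) = e x) (ψ : MulChar F ℂ) (j : ℕ) :
    gaussSum (ψ ^ (p ^ j)) e = gaussSum ψ e := by
  induction j with
  | zero => simp
  | succ j ih =>
    rw [← ih, pow_succ, pow_mul]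
    generalize ψ ^ (p ^ j) = φ
    unfold gaussSum
    have hp0 : p ≠ 0 := (Fact.out : p.Prime).ne_zero
    refine Fintype.sum_bijective (fun x : F => x ^ p) ?_ _ _ ?_
    · exact (Finite.injective_iff_bijective).mp (frobenius_inj F p)
    · intro x
      rw [he, MulChar.pow_apply' _ hp0, map_pow]

/-- Expansion of a function factoring through `χ` in powers of `χ`. -/
lemma expansion {F : Type*} [Field F] [Fintype F] (χ : MulChar F ℂ) (P : ℕ) (hP : 0 < P)
    (hχ : χ ^ P = 1) (u : F → ℂ)
    (hu : ∀ x y : F, x ≠ 0 → y ≠ 0 → χ x = χ y → u x = u y) :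
    ∃ c : ℕ → ℂ, ∀ x : F, x ≠ 0 → u x = ∑ k ∈ Finset.range P, c k * (χ ^ k) x := by
  let M : ℕ := (Finset.univ.filter (fun y : Fˣ => χ y = 1)).card
  have hM : M ≠ 0 := Finset.card_ne_zero_of_mem (a := 1) (by simp)
  have orth : ∀ x y : Fˣ, ∑ k ∈ Finset.range P, (χ ^ k) ((y⁻¹ : Fˣ) : F) * (χ ^ k) (x : F)
      = if χ x = χ y then (P : ℂ) else 0 := by
    intro x y
    have e0 : ∀ k, (χ ^ k) ((y⁻¹ : Fˣ) : F) * (χ ^ k) (x : F) = (χ ((y⁻¹ * x : Fˣ) : F)) ^ k := by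
      intro k
      rw [← map_mul, ← Units.val_mul, MulChar.pow_apply_coe]
    have ex : χ (x : F) = χ (y : F) * χ ((y⁻¹ * x : Fˣ) : F) := by
      rw [← map_mul, ← Units.val_mul]; simp
    simp only [e0]
    set t := χ ((y⁻¹ * x : Fˣ) : F) with ht
    have htP : t ^ P = 1 := by
      rw [ht, ← MulChar.pow_apply_coe, hχ, MulChar.one_apply_coe]
    have hy0 : χ (y : F) ≠ 0 := (y.isUnit.map χ).ne_zero
    by_cases h1 : t = 1
    · simp [h1, ex]
    · have : χ (x : F) ≠ χ (y : F) := by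
        rw [ex]; intro h; exact h1 (mul_left_cancel₀ hy0 (by rw [h, mul_one]))
      rw [if_neg this, geom_sum_eq h1, htP, sub_self, zero_div]
  refine ⟨fun k => (∑ y : Fˣ, u y * (χ ^ k) ((y⁻¹ : Fˣ) : F)) / (P * M), ?_⟩
  intro x hx
  lift x to Fˣ using hx.isUnit
  have hP' : (P : ℂ) ≠ 0 := by exact_mod_cast hP.ne'
  have hM' : (M : ℂ) ≠ 0 := by exact_mod_cast hM
  have e1 : ∑ k ∈ Finset.range P, (∑ y : Fˣ, u y * (χ ^ k) ((y⁻¹ : Fˣ) : F)) / (P * M) * (χ ^ k) (x : F)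
      = (∑ y : Fˣ, u y * (if χ x = χ y then (P : ℂ) else 0)) / (P * M) := by
    simp only [← orth, Finset.mul_sum, Finset.sum_div, Finset.sum_mul]
    rw [Finset.sum_comm]
    refine Finset.sum_congr rfl fun y _ => Finset.sum_congr rfl fun k _ => ?_
    ring
  rw [e1]
  have e2 : ∑ y : Fˣ, u y * (if χ x = χ y then (P : ℂ) else 0) = u x * (P * M) := by
    have : ∀ y : Fˣ, u y * (if χ x = χ y then (P : ℂ) else 0)
        = if χ x = χ y then u x * P else 0 := by
      intro y
      split_ifs with h
      · rw [hu x y x.ne_zero y.ne_zero h]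
      · simp
    simp only [this]
    rw [Finset.sum_ite, Finset.sum_const_zero, add_zero, Finset.sum_const, nsmul_eq_mul]
    have hc : (Finset.univ.filter (fun y : Fˣ => χ (x : F) = χ (y : F))).card = M := by
      symm
      refine Finset.card_bij (fun y _ => x * y) ?_ ?_ ?_
      · intro y hy; simp at hy; simp [hy]
      · intro a _ b _ h; exact mul_left_cancel h
      · intro b hb
        simp at hb
        have hx0 : χ (x : F) ≠ 0 := (x.isUnit.map χ).ne_zero
        refine ⟨x⁻¹ * b, ?_, by simp⟩
        simp only [Finset.mem_filter, Finset.mem_univ, true_and]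
        apply mul_left_cancel₀ hx0
        rw [← map_mul, ← Units.val_mul]; simp [hb]
    rw [hc]; ring
  rw [e2, mul_div_cancel_right₀ _ (mul_ne_zero hP' hM')]

lemma core_corr {F : Type*} [Field F] [Fintype F] (e : AddChar F ℂ) (he : e.IsPrimitive)
    (χ : MulChar F ℂ) (P : ℕ) (G : ℂ) (hG2 : G ^ 2 = Fintype.card F)
    (hG : ∀ k, gaussSum (χ ^ k * qc F) e = G)
    (H : F → ℂ) (H1 : ∀ x, x ≠ 0 → H x ^ 2 = 1) (Hneg : ∀ x, H (-x) = H x)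
    (c : ℕ → ℂ) (hc : ∀ x, H x = ∑ k ∈ Finset.range P, c k * (χ ^ k * qc F) x)
    (hn : ∀ k, χ ^ k * qc F ≠ 1) :
    (∑ x, H x = 0) ∧ ∀ g : F, g ≠ 0 → ∑ y, H (y + g) * H y = -1 := by
  have hS : ∑ x, H x = 0 := by
    simp only [hc]
    rw [Finset.sum_comm]
    refine Finset.sum_eq_zero fun k _ => ?_
    rw [← Finset.mul_sum, MulChar.sum_eq_zero_of_ne_one (hn k), mul_zero]
  refine ⟨hS, ?_⟩
  have hat : ∀ a : F, a ≠ 0 → ∑ x, H x * e (x * a) = G * H a⁻¹ := by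
    intro a ha
    lift a to Fˣ using ha.isUnit
    rw [hc (a : F)⁻¹, Finset.mul_sum]
    have : ∀ x, H x * e (x * a) =
        ∑ k ∈ Finset.range P, c k * ((χ ^ k * qc F) x * (e.mulShift a) x) := by
      intro x
      rw [hc x, Finset.sum_mul, AddChar.mulShift_apply, mul_comm x]
      exact Finset.sum_congr rfl fun k _ => by ring
    simp only [this]
    rw [Finset.sum_comm]
    refine Finset.sum_congr rfl fun k _ => ?_
    rw [← Finset.mul_sum]
    have h2 := gaussSum_mulShift_eq (χ ^ k * qc F) e a
    unfold gaussSum at h2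
    rw [h2]
    have h3 := hG k
    unfold gaussSum at h3
    rw [h3, MulChar.inv_apply']
    ring
  intro g hg
  have hq : (Fintype.card F : ℂ) ≠ 0 := by exact_mod_cast Fintype.card_ne_zero
  have e1 : ∑ a : F, (∑ x, H x * e (x * a)) * (∑ y, H y * e (y * (-a))) * e (a * (-g))
      = Fintype.card F * ∑ y, H (y + g) * H y := by
    have s1 : ∀ a : F, (∑ x, H x * e (x * a)) * (∑ y, H y * e (y * (-a))) * e (a * (-g))
        = ∑ x, ∑ y, H x * H y * e (a * (x - y - g)) := by
      intro a
      rw [Finset.sum_mul_sum, Finset.sum_mul]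
      refine Finset.sum_congr rfl fun x _ => ?_
      rw [Finset.sum_mul]
      refine Finset.sum_congr rfl fun y _ => ?_
      rw [show a * (x - y - g) = x * a + y * (-a) + a * (-g) by ring,
        AddChar.map_add_eq_mul, AddChar.map_add_eq_mul]
      ring
    simp only [s1]
    rw [Finset.sum_comm]
    simp only [Finset.sum_comm (s := Finset.univ) (t := Finset.univ)
      (f := fun (a : F) (y : F) => H _ * H y * e (a * (_ - y - g)))]
    simp only [← Finset.mul_sum, AddChar.sum_mulShift _ he]
    rw [Finset.sum_comm, Finset.mul_sum]
    refine Finset.sum_congr rfl fun y _ => ?_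
    rw [Finset.sum_eq_single (y + g)]
    · simp; ring
    · intro x _ hx
      rw [if_neg (by intro h; apply hx; linear_combination h)]
      simp
    · simp
  have e2 : ∑ a : F, (∑ x, H x * e (x * a)) * (∑ y, H y * e (y * (-a))) * e (a * (-g))
      = -(Fintype.card F : ℂ) := by
    have s2 : ∀ a : F, (∑ x, H x * e (x * a)) * (∑ y, H y * e (y * (-a))) * e (a * (-g))
        = (Fintype.card F : ℂ) * e (a * (-g)) - if a = 0 then (Fintype.card F : ℂ) else 0 := by
      intro a
      by_cases ha : a = 0
      · simp [ha, hS]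
      · rw [hat a ha, hat (-a) (neg_ne_zero.mpr ha), inv_neg, Hneg, if_neg ha, ← hG2]
        linear_combination (G ^ 2 * e (a * (-g))) * H1 a⁻¹ (inv_ne_zero ha)
    simp only [s2]
    rw [Finset.sum_sub_distrib, ← Finset.mul_sum, AddChar.sum_mulShift _ he]
    simp [hg]
  rw [e1] at e2
  apply mul_left_cancel₀ hq
  rw [e2]; ring

lemma paley_of_corr {F : Type*} [Field F] [Fintype F] (D : Set F) (h0 : (0 : F) ∉ D)
    (H : F → ℂ) (hH : ∀ x, H x = if x = 0 then 0 else if x ∈ D then 1 else -1)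
    (Hneg : ∀ x, H (-x) = H x)
    (hS : ∑ x, H x = 0) (hA : ∀ g : F, g ≠ 0 → ∑ y, H (y + g) * H y = -1) :
    IsPaleyTypePDS D := by
  have neg : ∀ g : F, -g ∈ D ↔ g ∈ D := by
    intro g
    by_cases hg : g = 0
    · simp [hg]
    have := Hneg g
    rw [hH, hH, if_neg hg, if_neg (neg_ne_zero.mpr hg)] at this
    by_cases h1 : g ∈ D <;> by_cases h2 : -g ∈ D <;> simp [h1, h2] at this ⊢ <;> norm_num at this
  refine ⟨h0, neg, ?_⟩
  intro g hg
  have ind : ∀ y : F, (if y ∈ D then (1 : ℂ) else 0) * 2 = 1 - (if y = 0 then 1 else 0) + H y := by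
    intro y
    rw [hH]
    by_cases hy : y = 0
    · simp [hy, h0]
    · by_cases h : y ∈ D <;> simp [hy, h]; norm_num
  have cnt : (Nat.card {x : F × F // x.1 ∈ D ∧ x.2 ∈ D ∧ x.1 - x.2 = g} : ℂ)
      = ∑ y : F, (if y + g ∈ D then (1 : ℂ) else 0) * (if y ∈ D then (1 : ℂ) else 0) := by
    have b : Nat.card {x : F × F // x.1 ∈ D ∧ x.2 ∈ D ∧ x.1 - x.2 = g}
        = (Finset.univ.filter (fun y : F => y + g ∈ D ∧ y ∈ D)).card := by
      rw [Nat.card_eq_fintype_card, Fintype.card_subtype]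
      refine Finset.card_bij (fun x _ => x.2) ?_ ?_ ?_
      · rintro ⟨x, y⟩ h
        simp at h ⊢
        obtain ⟨h1, h2, rfl⟩ := h
        simpa using ⟨h1, h2⟩
      · rintro ⟨x, y⟩ h ⟨x', y'⟩ h' hh
        simp at h h' hh ⊢
        refine ⟨?_, hh⟩
        rw [← hh] at h'
        linear_combination h.2.2 - h'.2.2
      · intro y hy
        simp at hy
        exact ⟨(y + g, y), by simpa using hy, rfl⟩
    rw [b, Finset.card_filter, Nat.cast_sum]
    refine Finset.sum_congr rfl fun y _ => ?_
    by_cases h1 : y + g ∈ D <;> by_cases h2 : y ∈ D <;> simp [h1, h2]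
  have main : 4 * (Nat.card {x : F × F // x.1 ∈ D ∧ x.2 ∈ D ∧ x.1 - x.2 = g} : ℂ)
      = Fintype.card F - 3 - 2 * H g := by
    rw [cnt, Finset.mul_sum]
    have s : ∀ y : F, 4 * ((if y + g ∈ D then (1 : ℂ) else 0) * (if y ∈ D then (1 : ℂ) else 0))
        = 1 - (if y = 0 then 1 else 0) - (if y = -g then 1 else 0) + H y + H (y + g)
          - (if y = -g then H g else 0) - (if y = 0 then H g else 0) + H (y + g) * H y := by
      intro y
      have i1 := ind y
      have i2 := ind (y + g)
      have : 4 * ((if y + g ∈ D then (1 : ℂ) else 0) * (if y ∈ D then (1 : ℂ) else 0))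
        = (1 - (if y + g = 0 then 1 else 0) + H (y + g)) * (1 - (if y = 0 then 1 else 0) + H y) := by
        rw [← i1, ← i2]; ring
      rw [this]
      have hiff : y + g = 0 ↔ y = -g := eq_neg_iff_add_eq_zero.symm
      simp only [hiff]
      by_cases ha : y = 0
      · have hb : (0 : F) ≠ -g := fun h => hg (by linear_combination h)
        subst ha
        simp [hb]; ring
      · by_cases hb : y = -g
        · subst hb
          simp [hg, Hneg, hH 0]
        · simp [ha, hb]; ring
    simp only [s]
    have hS' : ∑ y, H (y + g) = 0 := by
      rw [← hS]; exact Equiv.sum_comp (Equiv.addRight g) H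
    simp only [Finset.sum_add_distrib, Finset.sum_sub_distrib, hS, hS', hA g hg]
    simp
    ring
  constructor
  · intro hD
    have : H g = 1 := by simp [hH, hg, hD]
    rw [this] at main
    have h2 : (4 * (Nat.card {x : F × F // x.1 ∈ D ∧ x.2 ∈ D ∧ x.1 - x.2 = g} : ℂ)) + 5
      = Fintype.card F := by rw [main]; ring
    exact_mod_cast h2
  · intro hD
    have : H g = -1 := by simp [hH, hg, hD]
    rw [this] at main
    have h2 : (4 * (Nat.card {x : F × F // x.1 ∈ D ∧ x.2 ∈ D ∧ x.1 - x.2 = g} : ℂ)) + 1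
      = Fintype.card F := by rw [main]; ring
    exact_mod_cast h2

lemma nt_facts (p₁ m : ℕ) (hp₁ : p₁.Prime) (hp₁mod : p₁ % 8 = 7)
    (hm : 1 ≤ m) (N : ℕ) (hN : N = 2 * p₁ ^ m)
    (p : ℕ) (hp : p.Prime) (hpmod : p % 4 = 1)
    (f : ℕ) (hf : f = orderOf ((p : ZMod N))) (hford : 2 * f = Nat.totient N) :
    Odd (p₁ ^ m) ∧ (∀ s, p ^ (f * s) ≡ 1 [MOD N]) ∧ (p - 1).Coprime (p₁ ^ m) ∧
      ∃ j, p ^ j ≡ 2 [MOD p₁ ^ m] := by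
  have hodd₁ : Odd p₁ := by rw [Nat.odd_iff]; omega
  have hodd : Odd (p₁ ^ m) := hodd₁.pow
  have hpodd : Odd p := by rw [Nat.odd_iff]; omega
  obtain ⟨n, rfl⟩ : ∃ n, m = n + 1 := ⟨m - 1, by omega⟩
  have htot : Nat.totient N = p₁ ^ n * (p₁ - 1) := by
    rw [hN, Nat.totient_mul (Nat.coprime_two_left.mpr hodd), Nat.totient_two, one_mul,
      Nat.totient_prime_pow_succ hp₁]
  have hpn : 0 < p₁ ^ n := pow_pos hp₁.pos _
  have hfe : f = p₁ ^ n * ((p₁ - 1) / 2) := by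
    obtain ⟨k, hk⟩ : ∃ k, p₁ - 1 = 2 * k := ⟨(p₁ - 1) / 2, by omega⟩
    rw [htot, hk] at hford
    rw [hk, Nat.mul_div_cancel_left _ (by norm_num)]
    nlinarith
  -- powers modulo `N` and modulo `p₁ ^ m`
  have hmodN : ∀ k, p ^ k ≡ 1 [MOD p₁ ^ (n + 1)] → f ∣ k := by
    intro k hk
    rw [hf]
    apply orderOf_dvd_of_pow_eq_one
    have h2 : p ^ k ≡ 1 [MOD 2] := Nat.odd_iff.mp hpodd.pow
    have h3 : p ^ k ≡ 1 [MOD N] := by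
      rw [hN]
      exact (Nat.modEq_and_modEq_iff_modEq_mul (Nat.coprime_two_left.mpr hodd)).mp ⟨h2, hk⟩
    exact_mod_cast (ZMod.natCast_eq_natCast_iff _ _ _).mpr h3
  have hpf : p ^ f ≡ 1 [MOD N] := by
    rw [← ZMod.natCast_eq_natCast_iff]
    push_cast
    rw [hf]
    exact pow_orderOf_eq_one _
  have hlift : ∀ a k : ℕ, a ^ k ≡ 1 [MOD p₁] → a ^ (k * p₁ ^ n) ≡ 1 [MOD p₁ ^ (n + 1)] := by
    intro a k h
    have h1 : (p₁ : ℤ) ∣ ((a ^ k : ℕ) : ℤ) - 1 := by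
      have := (Nat.modEq_iff_dvd.mp h.symm); simpa using this
    have h2 := dvd_sub_pow_of_dvd_sub h1 n
    refine (Nat.modEq_iff_dvd.mpr ?_).symm
    push_cast at h2 ⊢
    rw [one_pow, ← pow_mul] at h2
    exact h2
  have hge : 3 ≤ (p₁ - 1) / 2 := by omega
  refine ⟨hodd, ?_, ?_, ?_⟩
  · intro s
    rw [pow_mul]
    simpa using hpf.pow s
  · apply Nat.Coprime.pow_right
    rw [Nat.coprime_comm, Nat.Prime.coprime_iff_not_dvd hp₁]
    intro hd
    have h1 : p ^ 1 ≡ 1 [MOD p₁] := by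
      rw [pow_one]
      exact ((Nat.modEq_iff_dvd' hp.one_le).mpr hd).symm
    have h2 := hmodN _ (hlift p 1 h1)
    rw [one_mul] at h2
    have h3 := Nat.le_of_dvd hpn h2
    rw [hfe] at h3
    nlinarith
  · haveI : Fact p₁.Prime := ⟨hp₁⟩
    haveI : NeZero (p₁ ^ (n + 1)) := ⟨(pow_pos hp₁.pos _).ne'⟩
    have hcyc := ZMod.isCyclic_units_of_prime_pow p₁ hp₁ (by omega) (n + 1)
    have hf0 : 0 < f := by rw [hfe]; positivity
    have h2f : 2 ^ f ≡ 1 [MOD p₁ ^ (n + 1)] := by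
      rw [hfe, mul_comm]
      apply hlift
      have h20 : (2 : ZMod p₁) ≠ 0 := by
        intro h
        have : ((2 : ℕ) : ZMod p₁) = 0 := by exact_mod_cast h
        rw [ZMod.natCast_eq_zero_iff] at this
        have := Nat.le_of_dvd (by norm_num) this
        omega
      have hsq := (ZMod.exists_sq_eq_two_iff (p := p₁) (by omega)).mpr (Or.inr hp₁mod)
      have := (ZMod.euler_criterion p₁ h20).mp hsq
      rw [← ZMod.natCast_eq_natCast_iff]
      push_cast
      rw [show (p₁ - 1) / 2 = p₁ / 2 by omega]
      exact this
    have hpf' : p ^ f ≡ 1 [MOD p₁ ^ (n + 1)] := hpf.of_dvd (hN ▸ dvd_mul_left _ _)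
    let U : (ZMod (p₁ ^ (n + 1)))ˣ := Units.ofPowEqOne (p : ZMod (p₁ ^ (n + 1))) f (by
      exact_mod_cast (ZMod.natCast_eq_natCast_iff _ _ _).mpr hpf') hf0.ne'
    let T : (ZMod (p₁ ^ (n + 1)))ˣ := Units.ofPowEqOne (2 : ZMod (p₁ ^ (n + 1))) f (by
      exact_mod_cast (ZMod.natCast_eq_natCast_iff _ _ _).mpr h2f) hf0.ne'
    have hUord : f ≤ orderOf U := by
      apply Nat.le_of_dvd (orderOf_pos U)
      apply hmodN
      rw [← ZMod.natCast_eq_natCast_iff]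
      have := congrArg (Units.val) (pow_orderOf_eq_one U)
      push_cast at this ⊢
      exact this
    have hUf : U ^ f = 1 := Units.pow_ofPowEqOne _ _
    have hTf : T ^ f = 1 := Units.pow_ofPowEqOne _ _
    have hmem : T ∈ Subgroup.zpowers U := by
      by_contra hT
      have hle := IsCyclic.card_pow_eq_one_le (α := (ZMod (p₁ ^ (n + 1)))ˣ) hf0
      have hsub : insert T (Finset.univ.filter (fun x => x ∈ Subgroup.zpowers U)) ⊆
          Finset.univ.filter (fun a : (ZMod (p₁ ^ (n + 1)))ˣ => a ^ f = 1) := by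
        intro x hx
        simp only [Finset.mem_insert, Finset.mem_filter, Finset.mem_univ, true_and] at hx ⊢
        rcases hx with rfl | ⟨k, rfl⟩
        · exact hTf
        · show (U ^ k) ^ f = 1
          rw [← zpow_natCast, ← zpow_mul, mul_comm, zpow_mul, zpow_natCast, hUf, one_zpow]
      have h1 := Finset.card_le_card hsub
      rw [Finset.card_insert_of_notMem (by simpa using hT)] at h1
      have h2 : (Finset.univ.filter (fun x => x ∈ Subgroup.zpowers U)).card = orderOf U := by
        rw [← Nat.card_zpowers, Nat.card_eq_fintype_card, Fintype.card_subtype]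
      omega
    obtain ⟨j, hj⟩ := (mem_powers_iff_mem_zpowers.mpr hmem)
    refine ⟨j, ?_⟩
    rw [← ZMod.natCast_eq_natCast_iff]
    have := congrArg Units.val hj
    push_cast at this ⊢
    exact this

lemma half_mem (P : ℕ) (hP : Odd P) (I : Finset ℕ)
    (hI : Set.BijOn (fun i : ℕ => (i : ZMod P)) ↑I Set.univ) (a : ℤ) :
    (∃ i ∈ I, ((2 * P : ℕ) : ℤ) ∣ (a + P) - i) ↔ ¬ ∃ i ∈ I, ((2 * P : ℕ) : ℤ) ∣ a - i := by
  obtain ⟨i, hiI, hi⟩ := hI.surjOn (Set.mem_univ (a : ZMod P))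
  have hP0 : (P : ℤ) ≠ 0 := by
    obtain ⟨k, rfl⟩ := hP
    push_cast; omega
  have hi' : (P : ℤ) ∣ a - i := by
    rw [← ZMod.intCast_zmod_eq_zero_iff_dvd]
    push_cast
    rw [sub_eq_zero]; exact hi.symm
  have uniq : ∀ j ∈ I, (P : ℤ) ∣ a - j → j = i := by
    intro j hj h
    apply hI.injOn hj hiI
    show (j : ZMod P) = (i : ZMod P)
    have h' := (ZMod.intCast_zmod_eq_zero_iff_dvd _ _).mpr h
    push_cast at h'
    have hi2 : (i : ZMod P) = (a : ZMod P) := hi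
    rw [hi2]
    exact (sub_eq_zero.mp h').symm
  have hPN : (P : ℤ) ∣ ((2 * P : ℕ) : ℤ) := by push_cast; exact dvd_mul_left _ _
  have hA : (∃ j ∈ I, ((2 * P : ℕ) : ℤ) ∣ a - j) ↔ ((2 * P : ℕ) : ℤ) ∣ a - i := by
    constructor
    · rintro ⟨j, hj, h⟩
      rw [← uniq j hj (hPN.trans h)]; exact h
    · exact fun h => ⟨i, hiI, h⟩
  have hB : (∃ j ∈ I, ((2 * P : ℕ) : ℤ) ∣ (a + P) - j) ↔ ((2 * P : ℕ) : ℤ) ∣ (a + P) - i := by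
    constructor
    · rintro ⟨j, hj, h⟩
      have h2 : (P : ℤ) ∣ a - j := by
        have := dvd_sub (hPN.trans h) (dvd_refl (P : ℤ))
        rwa [show a + P - j - (P : ℤ) = a - j by ring] at this
      rw [← uniq j hj h2]; exact h
    · exact fun h => ⟨i, hiI, h⟩
  rw [hA, hB]
  obtain ⟨t, ht⟩ := hi'
  rw [show a + P - i = P * (t + 1) by linear_combination ht, ht]
  push_cast
  rw [mul_comm (2 : ℤ), mul_dvd_mul_iff_left hP0, mul_dvd_mul_iff_left hP0]
  omega

/-- Theorem 1.3(i) of the paper, the case `p ≡ 1 (mod 4)`. -/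
theorem statement_5 (p₁ m : ℕ) (hp₁ : p₁.Prime) (hp₁mod : p₁ % 8 = 7)
    (hm : 1 ≤ m) (N : ℕ) (hN : N = 2 * p₁ ^ m)
    (p : ℕ) (hp : p.Prime) (hpmod : p % 4 = 1)
    (f : ℕ) (hf : f = orderOf ((p : ZMod N))) (hford : 2 * f = Nat.totient N)
    (s : ℕ) (hs : Odd s) (hspos : 0 < s)
    (F : Type*) [Field F] [Fintype F] (hcard : Fintype.card F = p ^ (f * s))
    (γ : Fˣ) (hγ : ∀ x : Fˣ, x ∈ Subgroup.zpowers γ)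
    (I : Finset ℕ) (hIN : ∀ i ∈ I, i < N)
    (hI : Set.BijOn (fun i : ℕ => (i : ZMod (p₁ ^ m))) ↑I Set.univ)
    (D : Set F) (hD : D = ⋃ i ∈ I, cycClass γ N i) :
    IsPaleyTypePDS D := by
  obtain ⟨hPodd, hpow, hcop, j, hj⟩ :=
    nt_facts p₁ m hp₁ hp₁mod hm N hN p hp hpmod f hf hford
  have hPpos : 0 < p₁ ^ m := pow_pos hp₁.pos _
  generalize p₁ ^ m = P at *
  haveI : Fact p.Prime := ⟨hp⟩
  haveI : CharP F p := charP_of_card_eq_prime_pow (f := f * s) (by simpa using hcard)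
  have hF : ringChar F ≠ 2 := by
    rw [ringChar.eq F p]
    intro h; omega
  have hq4 : Fintype.card F % 4 = 1 := by
    rw [hcard, Nat.pow_mod, hpmod]; simp
  have hNq : N ∣ Fintype.card F - 1 := by
    rw [hcard]
    exact (Nat.modEq_iff_dvd' (Nat.one_le_pow _ _ hp.pos)).mp (hpow s).symm
  have hord : orderOf γ = Fintype.card F - 1 := by
    rw [orderOf_eq_card_of_forall_mem_zpowers hγ, Nat.card_eq_fintype_card, Fintype.card_units]
  -- the character `χ` of order `P`
  have hζ := Complex.isPrimitiveRoot_exp P hPpos.ne'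
  obtain ⟨ζ, hζ⟩ : ∃ ζ : ℂˣ, IsPrimitiveRoot ζ P :=
    ⟨(hζ.isUnit hPpos.ne').unit, hζ.isUnit_unit hPpos.ne'⟩
  have hPq : P ∣ Fintype.card F - 1 := (hN ▸ dvd_mul_left P 2 : P ∣ N).trans hNq
  have hζmem : ζ ∈ rootsOfUnity (Fintype.card Fˣ) ℂ := by
    rw [mem_rootsOfUnity, Fintype.card_units]
    exact (hζ.pow_eq_one_iff_dvd _).mpr hPq
  let χ : MulChar F ℂ := MulChar.ofRootOfUnity hζmem hγ
  have hχγ : χ (γ : F) = ζ := MulChar.ofRootOfUnity_spec hζmem hγ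
  have mz : ∀ (φ : MulChar F ℂ) (k : ℤ), φ ((γ ^ k : Fˣ) : F) = (φ (γ : F)) ^ k := by
    intro φ k
    rw [← MulChar.coe_toUnitHom, map_zpow, Units.val_zpow_eq_zpow_val, MulChar.coe_toUnitHom]
  have hχP : χ ^ P = 1 := by
    ext x
    obtain ⟨k, rfl⟩ := hγ x
    show (χ ^ P) ((γ ^ k : Fˣ) : F) = (1 : MulChar F ℂ) ((γ ^ k : Fˣ) : F)
    rw [MulChar.one_apply_coe, MulChar.pow_apply_coe, mz, hχγ, ← zpow_natCast, ← zpow_mul,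
      mul_comm, zpow_mul, zpow_natCast, ← Units.val_pow_eq_pow_val, hζ.pow_eq_one]
    simp
  have hηγ : qc F (γ : F) = -1 := by
    rcases qc_isQuadratic F (γ : F) with h | h | h
    · exact absurd h (γ.isUnit.map (qc F)).ne_zero
    · exfalso
      apply qc_ne_one hF
      ext x
      obtain ⟨k, rfl⟩ := hγ x
      show (qc F) ((γ ^ k : Fˣ) : F) = (1 : MulChar F ℂ) ((γ ^ k : Fˣ) : F)
      rw [MulChar.one_apply_coe, mz, h, one_zpow]
    · exact h
  have hηneg : qc F (-1) = 1 := by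
    rw [qc_apply, quadraticChar_neg_one hF, ZMod.χ₄_nat_one_mod_four hq4]; simp
  have hχneg : χ (-1) = 1 := by
    have h1 : χ (-1) ^ P = 1 := by
      rw [show (-1 : F) = ((-1 : Fˣ) : F) by simp, ← MulChar.pow_apply_coe, hχP,
        MulChar.one_apply_coe]
    obtain ⟨k, hk⟩ := hPodd
    rw [hk, pow_succ, pow_mul, ← map_pow] at h1
    simpa using h1
  have hχ2 : ∀ k, (χ ^ k) 2 = 1 := by
    intro k
    have h20 : (2 : F) ≠ 0 := Ring.two_ne_zero hF
    have h2u : IsUnit (2 : F) := h20.isUnit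
    obtain ⟨t, ht⟩ := h2u
    have h1 : χ 2 ^ P = 1 := by
      rw [← ht, ← MulChar.pow_apply_coe, hχP, MulChar.one_apply_coe]
    have h2 : χ 2 ^ (p - 1) = 1 := by
      rw [← map_pow]
      have : (2 : F) ^ p = 2 := by
        have := map_ofNat (frobenius F p) 2
        simpa only [frobenius_def] using this
      have h3 : (2 : F) ^ (p - 1) = 1 := by
        apply mul_right_cancel₀ h20
        rw [← pow_succ, Nat.sub_add_cancel hp.one_le, this, one_mul]
      rw [h3, map_one]
    have h4 : χ 2 = 1 := by
      rw [← orderOf_eq_one_iff]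
      exact Nat.eq_one_of_dvd_coprimes hcop (orderOf_dvd_of_pow_eq_one h2)
        (orderOf_dvd_of_pow_eq_one h1)
    rw [← ht, MulChar.pow_apply_coe, ht, h4, one_pow]
  obtain ⟨e, he, hef⟩ := exists_addChar (F := F) p
  have hkP : ∀ k, (χ ^ k) ^ P = 1 := by
    intro k; rw [← pow_mul, mul_comm, pow_mul, hχP, one_pow]
  have hG : ∀ k, gaussSum (χ ^ k * qc F) e = gaussSum (qc F) e := by
    intro k
    refine gauss_twist hF e he (χ ^ k) P hPodd (hkP k) (hχ2 k) ?_
    rw [← gauss_frob p e hef (χ ^ k) j]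
    congr 1
    rw [pow_eq_pow_iff_modEq]
    exact (hj.of_dvd (orderOf_dvd_of_pow_eq_one (hkP k))).symm
  have hn : ∀ k, χ ^ k * qc F ≠ 1 := by
    intro k h
    have := congrArg (· ^ P) h
    simp only [mul_pow, hkP, one_mul, one_pow] at this
    obtain ⟨t, ht⟩ := hPodd
    rw [ht, pow_succ, pow_mul, (qc_isQuadratic F).sq_eq_one, one_pow, one_mul] at this
    exact qc_ne_one hF this
  have hG2 : gaussSum (qc F) e ^ 2 = Fintype.card F := by
    rw [gaussSum_sq (qc_ne_one hF) (qc_isQuadratic F) he, hηneg, one_mul]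
  -- membership in `D`
  have h0 : (0 : F) ∉ D := by
    rw [hD]
    simp only [Set.mem_iUnion, not_exists]
    rintro i _ ⟨k, hk⟩
    exact (Units.ne_zero _) hk.symm
  have hmem : ∀ a : ℤ, ((γ ^ a : Fˣ) : F) ∈ D ↔ ∃ i ∈ I, ((2 * P : ℕ) : ℤ) ∣ a - i := by
    intro a
    rw [hD, ← hN]
    simp only [Set.mem_iUnion, exists_prop]
    refine exists_congr fun i => and_congr_right fun _ => ?_
    constructor
    · rintro ⟨k, hk⟩
      have h1 : γ ^ a = γ ^ ((i : ℤ) + N * k) := Units.ext hk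
      have h2 : γ ^ (a - ((i : ℤ) + N * k)) = 1 := by rw [zpow_sub, h1, mul_inv_cancel]
      have h3 := orderOf_dvd_iff_zpow_eq_one.mpr h2
      rw [hord] at h3
      have h4 : (N : ℤ) ∣ a - ((i : ℤ) + N * k) := (Int.natCast_dvd_natCast.mpr hNq).trans h3
      have h5 := dvd_add h4 (dvd_mul_right (N : ℤ) k)
      rwa [show a - ((i : ℤ) + N * k) + N * k = a - i by ring] at h5
    · rintro ⟨k, hk⟩
      refine ⟨k, ?_⟩
      rw [← hk]; simp
  let H : F → ℂ := fun x => if x = 0 then 0 else if x ∈ D then 1 else -1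
  have hH : ∀ x, H x = if x = 0 then 0 else if x ∈ D then 1 else -1 := fun x => rfl
  have hper : Function.Periodic
      (fun a : ℤ => H ((γ ^ a : Fˣ) : F) * qc F ((γ ^ a : Fˣ) : F)) (P : ℤ) := by
    intro a
    have hm1 := half_mem P hPodd I hI a
    rw [← hmem, ← hmem] at hm1
    have hq : qc F ((γ ^ (a + P) : Fˣ) : F) = - qc F ((γ ^ a : Fˣ) : F) := by
      rw [mz, mz, hηγ, zpow_add₀ (by norm_num), zpow_natCast, hPodd.neg_one_pow]; ring
    show H ((γ ^ (a + P) : Fˣ) : F) * qc F ((γ ^ (a + P) : Fˣ) : F) =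
      H ((γ ^ a : Fˣ) : F) * qc F ((γ ^ a : Fˣ) : F)
    rw [hq, hH, hH, if_neg (Units.ne_zero _), if_neg (Units.ne_zero _)]
    by_cases h : ((γ ^ a : Fˣ) : F) ∈ D
    · rw [if_pos h, if_neg (fun h' => hm1.mp h' h)]; ring
    · rw [if_neg h, if_pos (hm1.mpr h)]; ring
  have hu : ∀ x y : F, x ≠ 0 → y ≠ 0 → χ x = χ y → H x * qc F x = H y * qc F y := by
    intro x y hx hy hxy
    lift x to Fˣ using hx.isUnit
    lift y to Fˣ using hy.isUnit
    obtain ⟨a, rfl⟩ := hγ x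
    obtain ⟨b, rfl⟩ := hγ y
    change χ ((γ ^ a : Fˣ) : F) = χ ((γ ^ b : Fˣ) : F) at hxy
    change H ((γ ^ a : Fˣ) : F) * qc F ((γ ^ a : Fˣ) : F) = H ((γ ^ b : Fˣ) : F) * qc F ((γ ^ b : Fˣ) : F)
    rw [mz, mz, hχγ, ← Units.val_zpow_eq_zpow_val, ← Units.val_zpow_eq_zpow_val] at hxy
    have h1 : ζ ^ a = ζ ^ b := Units.ext hxy
    have h2 : ζ ^ (a - b) = 1 := by rw [zpow_sub, h1, mul_inv_cancel]
    obtain ⟨k, hk⟩ := (hζ.zpow_eq_one_iff_dvd _).mp h2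
    have h3 := hper.int_mul k b
    rw [show a = b + k * P by linear_combination hk]
    exact h3
  have hηsq : ∀ x : F, x ≠ 0 → qc F x * qc F x = 1 := by
    intro x hx
    lift x to Fˣ using hx.isUnit
    rw [← MulChar.mul_apply, ← sq, (qc_isQuadratic F).sq_eq_one, MulChar.one_apply_coe]
  have Hneg : ∀ x, H (-x) = H x := by
    intro x
    by_cases hx : x = 0
    · simp [hx]
    have h1 := hu (-x) x (neg_ne_zero.mpr hx) hx (by
      rw [← neg_one_mul, map_mul, hχneg, one_mul])
    have h2 : qc F (-x) = qc F x := by rw [← neg_one_mul, map_mul, hηneg, one_mul]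
    rw [h2] at h1
    exact mul_right_cancel₀ (left_ne_zero_of_mul_eq_one (hηsq x hx)) h1
  obtain ⟨c, hc⟩ := expansion χ P hPpos hχP (fun x => H x * qc F x) hu
  have hc' : ∀ x, H x = ∑ k ∈ Finset.range P, c k * (χ ^ k * qc F) x := by
    intro x
    by_cases hx : x = 0
    · subst hx
      rw [hH, if_pos rfl]
      symm
      exact Finset.sum_eq_zero fun k _ => by rw [MulChar.map_zero, mul_zero]
    · have h1 := hc x hx
      have h2 : H x = (H x * qc F x) * qc F x := by rw [mul_assoc, hηsq x hx, mul_one]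
      rw [h2, h1, Finset.sum_mul]
      refine Finset.sum_congr rfl fun k _ => ?_
      rw [MulChar.mul_apply]; ring
  have H1 : ∀ x, x ≠ 0 → H x ^ 2 = 1 := by
    intro x hx
    rw [hH, if_neg hx]
    split_ifs <;> norm_num
  obtain ⟨hS, hA⟩ := core_corr e he χ P _ hG2 hG H H1 Hneg c hc' hn
  exact paley_of_corr D h0 H hH Hneg hS hA
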